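/- Define the time-T value functions J_T^1(π¹, u²) := min_{u¹ ∈ 𝒰_T^1} c̃_T^1(π¹, u¹, u²) and J_T^2(π²) := min_{u² ∈ 𝒰_T^2} E^{(g,ψ^2)}[J_T^1(Π_T^1, u²) | Π_T^2 = π², U_T^2 = u²]. Then: (1) for every admissible team strategy g of the structural form U_t^1 = g_t^1(Π_t^1, Π_t^2), U_t^2 = g_t^2(Π_t^2), the terminal cost satisfies 𝒥_T(g) ≥ E^{(g,ψ^2)}[J_T^2(Π_T^2)]; and (2) with g_T^{*1} the argmin law for agent 1 and g_T^{*2}(π²) ∈ argmin_{u²} E[J_T^1(Π_T^1, u²) | π², u²], equality holds: 𝒥_T(g_{0:T−1}, g_T^{*1}, g_T^{*2}) = E^{(g,ψ^2)}[J_T^2(Π_T^2)]. -/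

import Mathlib

/-!
Common framework: a two-agent sequential dynamic team with nested information
structure (Dave & Malikopoulos, "Structural results for decentralized
stochastic control with a nested information structure").

* `X t` : state space at time `t`; `U1 t`, `U2 t` : action spaces of agents 1 and 2;
* `W t` : disturbance; `V1 t`, `V2 t` : measurement noises; `Y1 t`, `Y2 t` : observations.
* Dynamics `X_{t+1} = f t X_t U¹_t U²_t W_t`, observations `Y^k_t = h^k t X_t V^k_t`.
* Memories `M²_t = (Y²_{0:t}, U²_{0:t-1})`, `L_t^{[1,2]} = (Y¹_{0:t}, U¹_{0:t-1})`,
  `M¹_t = (L_t^{[1,2]}, M²_t)` (nested information).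
* The primitive random variables are independent with given PMFs; the sample
  space for horizon `T` is `ΩT`, with the product mass function `mass`.
-/

open scoped Classical
open Finset

namespace NestedTeam

noncomputable section

/-- Memory of agent 2 at time `t`: observations `Y²₀,…,Y²ₜ` and actions `U²₀,…,U²ₜ₋₁`. -/
abbrev M2 (Y2 U2 : ℕ → Type) (t : ℕ) : Type :=
  ((s : Fin (t + 1)) → Y2 s) × ((s : Fin t) → U2 s)

/-- The private information `L_t^{[1,2]} = M¹_t \ M²_t` of agent 1. -/
abbrev Lp (Y1 U1 : ℕ → Type) (t : ℕ) : Type :=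
  ((s : Fin (t + 1)) → Y1 s) × ((s : Fin t) → U1 s)

/-- Memory of agent 1 at time `t` (nested information: it contains `M²_t`). -/
abbrev M1 (Y1 Y2 U1 U2 : ℕ → Type) (t : ℕ) : Type :=
  Lp Y1 U1 t × M2 Y2 U2 t

/-- The system: dynamics, observation maps and per-stage cost. -/
structure Sys (X U1 U2 W V1 V2 Y1 Y2 : ℕ → Type) where
  f : ∀ t, X t → U1 t → U2 t → W t → X (t + 1)
  h1 : ∀ t, X t → V1 t → Y1 t
  h2 : ∀ t, X t → V2 t → Y2 t
  c : ∀ t, X t → U1 t → U2 t → ℝ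

/-- A control strategy profile: `U¹_t = g1 t M¹_t`, `U²_t = g2 t M²_t`. -/
structure Strat (U1 U2 Y1 Y2 : ℕ → Type) where
  g1 : ∀ t, M1 Y1 Y2 U1 U2 t → U1 t
  g2 : ∀ t, M2 Y2 U2 t → U2 t

/-- A realization of the primitive random variables. -/
structure Prim (X W V1 V2 : ℕ → Type) where
  x0 : X 0
  w : ∀ t, W t
  v1 : ∀ t, V1 t
  v2 : ∀ t, V2 t

variable {X U1 U2 W V1 V2 Y1 Y2 : ℕ → Type}

/-- The closed-loop trajectory: states `X_{0:t}` and actions `U^{1:2}_{0:t-1}`. -/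
def hist (S : Sys X U1 U2 W V1 V2 Y1 Y2) (g : Strat U1 U2 Y1 Y2) (ρ : Prim X W V1 V2) :
    (t : ℕ) → ((s : Fin (t + 1)) → X s) × ((s : Fin t) → U1 s × U2 s)
  | 0 => (Fin.cons (α := fun s : Fin 1 => X s) ρ.x0 (fun i => i.elim0), fun i => i.elim0)
  | t + 1 =>
    let p := hist S g ρ t
    let y1 : (s : Fin (t + 1)) → Y1 s := fun s => S.h1 s (p.1 s) (ρ.v1 s)
    let y2 : (s : Fin (t + 1)) → Y2 s := fun s => S.h2 s (p.1 s) (ρ.v2 s)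
    let m1 : M1 Y1 Y2 U1 U2 t := ((y1, fun s => (p.2 s).1), (y2, fun s => (p.2 s).2))
    let a1 := g.g1 t m1
    let a2 := g.g2 t m1.2
    (Fin.snoc (α := fun s : Fin (t + 2) => X s) p.1 (S.f t (p.1 (Fin.last t)) a1 a2 (ρ.w t)),
     Fin.snoc (α := fun s : Fin (t + 1) => U1 s × U2 s) p.2 (a1, a2))

/-- State `X_t` along the closed loop. -/
def xTraj (S : Sys X U1 U2 W V1 V2 Y1 Y2) (g : Strat U1 U2 Y1 Y2) (ρ : Prim X W V1 V2)
    (t : ℕ) : X t := (hist S g ρ t).1 (Fin.last t)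

/-- `L_t^{[1,2]} = (Y¹_{0:t}, U¹_{0:t-1})` along the closed loop. -/
def lpTraj (S : Sys X U1 U2 W V1 V2 Y1 Y2) (g : Strat U1 U2 Y1 Y2) (ρ : Prim X W V1 V2)
    (t : ℕ) : Lp Y1 U1 t :=
  (fun s => S.h1 s ((hist S g ρ t).1 s) (ρ.v1 s), fun s => ((hist S g ρ t).2 s).1)

/-- `M²_t = (Y²_{0:t}, U²_{0:t-1})` along the closed loop. -/
def m2Traj (S : Sys X U1 U2 W V1 V2 Y1 Y2) (g : Strat U1 U2 Y1 Y2) (ρ : Prim X W V1 V2)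
    (t : ℕ) : M2 Y2 U2 t :=
  (fun s => S.h2 s ((hist S g ρ t).1 s) (ρ.v2 s), fun s => ((hist S g ρ t).2 s).2)

/-- `M¹_t` along the closed loop. -/
def m1Traj (S : Sys X U1 U2 W V1 V2 Y1 Y2) (g : Strat U1 U2 Y1 Y2) (ρ : Prim X W V1 V2)
    (t : ℕ) : M1 Y1 Y2 U1 U2 t := (lpTraj S g ρ t, m2Traj S g ρ t)

/-- Action `U¹_t` along the closed loop. -/
def u1Traj (S : Sys X U1 U2 W V1 V2 Y1 Y2) (g : Strat U1 U2 Y1 Y2) (ρ : Prim X W V1 V2)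
    (t : ℕ) : U1 t := g.g1 t (m1Traj S g ρ t)

/-- Action `U²_t` along the closed loop. -/
def u2Traj (S : Sys X U1 U2 W V1 V2 Y1 Y2) (g : Strat U1 U2 Y1 Y2) (ρ : Prim X W V1 V2)
    (t : ℕ) : U2 t := g.g2 t (m2Traj S g ρ t)

/-- Observation `Y¹_t` along the closed loop. -/
def y1Traj (S : Sys X U1 U2 W V1 V2 Y1 Y2) (g : Strat U1 U2 Y1 Y2) (ρ : Prim X W V1 V2)
    (t : ℕ) : Y1 t := S.h1 t (xTraj S g ρ t) (ρ.v1 t)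

/-- Observation `Y²_t` along the closed loop. -/
def y2Traj (S : Sys X U1 U2 W V1 V2 Y1 Y2) (g : Strat U1 U2 Y1 Y2) (ρ : Prim X W V1 V2)
    (t : ℕ) : Y2 t := S.h2 t (xTraj S g ρ t) (ρ.v2 t)

/-- New information `Z¹_{t+1} = (Y¹_{t+1}, U¹_t, Y²_{t+1}, U²_t)` of agent 1. -/
def z1Traj (S : Sys X U1 U2 W V1 V2 Y1 Y2) (g : Strat U1 U2 Y1 Y2) (ρ : Prim X W V1 V2)
    (t : ℕ) : Y1 (t + 1) × U1 t × Y2 (t + 1) × U2 t :=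
  (y1Traj S g ρ (t + 1), u1Traj S g ρ t, y2Traj S g ρ (t + 1), u2Traj S g ρ t)

/-- New information `Z²_{t+1} = (Y²_{t+1}, U²_t)` of agent 2. -/
def z2Traj (S : Sys X U1 U2 W V1 V2 Y1 Y2) (g : Strat U1 U2 Y1 Y2) (ρ : Prim X W V1 V2)
    (t : ℕ) : Y2 (t + 1) × U2 t := (y2Traj S g ρ (t + 1), u2Traj S g ρ t)

/-- Sample space of primitive random variables for horizon `T`. -/
abbrev ΩT (X W V1 V2 : ℕ → Type) (T : ℕ) : Type :=
  X 0 × ((t : Fin (T + 1)) → W t) × ((t : Fin (T + 1)) → V1 t) × ((t : Fin (T + 1)) → V2 t)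

/-- Extend a finite-horizon family to all times (by junk beyond the horizon). -/
def ext {α : ℕ → Type} [∀ t, Inhabited (α t)] (T : ℕ) (a : (t : Fin (T + 1)) → α t)
    (t : ℕ) : α t := if h : t < T + 1 then a ⟨t, h⟩ else default

/-- The primitive realization corresponding to a sample point. -/
def toPrim [∀ t, Inhabited (W t)] [∀ t, Inhabited (V1 t)] [∀ t, Inhabited (V2 t)]
    (T : ℕ) (ω : ΩT X W V1 V2 T) : Prim X W V1 V2 :=
  ⟨ω.1, ext T ω.2.1, ext T ω.2.2.1, ext T ω.2.2.2⟩

/-- The (known) probability mass functions of the mutually independent primitive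
random variables. -/
structure PrimPMF (X W V1 V2 : ℕ → Type) [Fintype (X 0)] [∀ t, Fintype (W t)]
    [∀ t, Fintype (V1 t)] [∀ t, Fintype (V2 t)] where
  pX0 : X 0 → ℝ
  pW : ∀ t, W t → ℝ
  pV1 : ∀ t, V1 t → ℝ
  pV2 : ∀ t, V2 t → ℝ
  pX0_nonneg : ∀ x, 0 ≤ pX0 x
  pX0_sum : ∑ x, pX0 x = 1
  pW_nonneg : ∀ t w, 0 ≤ pW t w
  pW_sum : ∀ t, ∑ w, pW t w = 1
  pV1_nonneg : ∀ t v, 0 ≤ pV1 t v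
  pV1_sum : ∀ t, ∑ v, pV1 t v = 1
  pV2_nonneg : ∀ t v, 0 ≤ pV2 t v
  pV2_sum : ∀ t, ∑ v, pV2 t v = 1

variable [Fintype (X 0)] [∀ t, Fintype (W t)] [∀ t, Fintype (V1 t)] [∀ t, Fintype (V2 t)]
variable [∀ t, Inhabited (W t)] [∀ t, Inhabited (V1 t)] [∀ t, Inhabited (V2 t)]

/-- Product mass of a sample point (independent primitives). -/
def mass (P : PrimPMF X W V1 V2) (T : ℕ) (ω : ΩT X W V1 V2 T) : ℝ :=
  P.pX0 ω.1 * (∏ t : Fin (T + 1), P.pW t (ω.2.1 t)) *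
    (∏ t : Fin (T + 1), P.pV1 t (ω.2.2.1 t)) * (∏ t : Fin (T + 1), P.pV2 t (ω.2.2.2 t))

/-- Elementary conditional probability `P(A | B)` on a finite sample space. -/
def condProb {Ω : Type*} [Fintype Ω] (P : Ω → ℝ) (A B : Ω → Prop) : ℝ :=
  (∑ ω, if A ω ∧ B ω then P ω else 0) / (∑ ω, if B ω then P ω else 0)

/-- Elementary conditional expectation `E[F | B]` on a finite sample space. -/
def condExp {Ω : Type*} [Fintype Ω] (P : Ω → ℝ) (F : Ω → ℝ) (B : Ω → Prop) : ℝ :=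
  (∑ ω, if B ω then P ω * F ω else 0) / (∑ ω, if B ω then P ω else 0)

/-- Agent 1's information state `Π¹_t = P(X_t = · | M¹_t)` at the realization `ω`. -/
def infoState1 (S : Sys X U1 U2 W V1 V2 Y1 Y2) (g : Strat U1 U2 Y1 Y2)
    (P : PrimPMF X W V1 V2) (T : ℕ) (ω : ΩT X W V1 V2 T) (t : ℕ) : X t → ℝ :=
  fun x => condProb (mass P T)
    (fun ω' => xTraj S g (toPrim T ω') t = x)
    (fun ω' => m1Traj S g (toPrim T ω') t = m1Traj S g (toPrim T ω) t)

/-- Agent 2's information state `Π²_t = P((X_t, L_t^{[1,2]}) = · | M²_t)` at `ω`. -/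
def infoState2 (S : Sys X U1 U2 W V1 V2 Y1 Y2) (g : Strat U1 U2 Y1 Y2)
    (P : PrimPMF X W V1 V2) (T : ℕ) (ω : ΩT X W V1 V2 T) (t : ℕ) :
    X t × Lp Y1 U1 t → ℝ :=
  fun sl => condProb (mass P T)
    (fun ω' => (xTraj S g (toPrim T ω') t, lpTraj S g (toPrim T ω') t) = sl)
    (fun ω' => m2Traj S g (toPrim T ω') t = m2Traj S g (toPrim T ω) t)

/-- Per-stage cost along the closed loop. -/
def stageCost (S : Sys X U1 U2 W V1 V2 Y1 Y2) (g : Strat U1 U2 Y1 Y2) (ρ : Prim X W V1 V2)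
    (t : ℕ) : ℝ := S.c t (xTraj S g ρ t) (u1Traj S g ρ t) (u2Traj S g ρ t)

/-- Expected cost-to-go `𝒥_{t₀}(g) = E[Σ_{t=t₀}^T c_t(X_t,U¹_t,U²_t)]`. -/
def costToGo (S : Sys X U1 U2 W V1 V2 Y1 Y2) (g : Strat U1 U2 Y1 Y2)
    (P : PrimPMF X W V1 V2) (T t0 : ℕ) : ℝ :=
  ∑ ω : ΩT X W V1 V2 T, mass P T ω * ∑ t ∈ Finset.Icc t0 T, stageCost S g (toPrim T ω) t

/-- Expected total cost `𝒥(g) = E[Σ_{t=0}^T c_t(X_t,U¹_t,U²_t)]`. -/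
def totalCost (S : Sys X U1 U2 W V1 V2 Y1 Y2) (g : Strat U1 U2 Y1 Y2)
    (P : PrimPMF X W V1 V2) (T : ℕ) : ℝ := costToGo S g P T 0

/-- `(g, ψ²)` is a compatible control/prescription pair: agent 1's action is
generated by the prescription `Γ_t^{[2,1]} = ψ_t(M²_t)` applied to `Π¹_t`. -/
def Compat (S : Sys X U1 U2 W V1 V2 Y1 Y2) (g : Strat U1 U2 Y1 Y2)
    (ψ : ∀ t, M2 Y2 U2 t → (X t → ℝ) → U1 t) (P : PrimPMF X W V1 V2) (T : ℕ) : Prop :=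
  ∀ t, t ≤ T → ∀ ω : ΩT X W V1 V2 T, 0 < mass P T ω →
    u1Traj S g (toPrim T ω) t =
      ψ t (m2Traj S g (toPrim T ω) t) (infoState1 S g P T ω t)

/-- The map `e_t` of Lemma 4: conditioning a joint distribution on
`𝒳_t × 𝓛_t^{[1,2]}` on its second component. -/
def eMap [∀ t, Fintype (X t)] (t : ℕ) (π2 : X t × Lp Y1 U1 t → ℝ) (l : Lp Y1 U1 t) :
    X t → ℝ := fun x => π2 (x, l) / ∑ x', π2 (x', l)

lemma condProb_eq {Ω : Type} [Fintype Ω] (p : Ω → ℝ) (A B : Ω → Prop)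
    [i1 : ∀ ω, Decidable (A ω ∧ B ω)] [i2 : ∀ ω, Decidable (B ω)] :
    condProb p A B =
      (∑ ω, if A ω ∧ B ω then p ω else 0) / (∑ ω, if B ω then p ω else 0) := by
  unfold condProb
  congr 1 <;> refine Finset.sum_congr rfl (fun ω _ => ?_) <;> congr

lemma key_aux {Ω A B M : Type} [Fintype Ω] [Fintype A] [Fintype B] [Fintype M]
    (p : Ω → ℝ) (hp : ∀ ω, 0 ≤ p ω) (x : Ω → A) (l : Ω → B) (m : Ω → M)
    (Q : M → A × B → ℝ)
    (hQ : ∀ k sl, Q k sl = condProb p (fun ω' => (x ω', l ω') = sl) (fun ω' => m ω' = k))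
    (F : A → B → M → ℝ) :
    ∑ ω, p ω * F (x ω) (l ω) (m ω) =
      ∑ ω, p ω * ∑ b, (∑ a, Q (m ω) (a, b)) *
        ∑ a, F a b (m ω) * (Q (m ω) (a, b) / ∑ a', Q (m ω) (a', b)) := by
  have hQ0 : ∀ k sl, 0 ≤ Q k sl := by
    intro k sl
    rw [hQ]
    unfold condProb
    apply div_nonneg <;> apply Finset.sum_nonneg <;> intro i _ <;> split_ifs <;> simp [hp]
  have h1 : ∀ k b, (∑ a, Q k (a, b)) * ∑ a, F a b k * (Q k (a, b) / ∑ a', Q k (a', b))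
      = ∑ a, F a b k * Q k (a, b) := by
    intro k b
    by_cases h : ∑ a', Q k (a', b) = 0
    · have h' := (Finset.sum_eq_zero_iff_of_nonneg (fun a _ => hQ0 k (a, b))).1 h
      rw [h, zero_mul]
      symm
      apply Finset.sum_eq_zero
      intro a ha
      rw [h' a ha, mul_zero]
    · rw [Finset.mul_sum]
      apply Finset.sum_congr rfl
      intro a _
      field_simp
  have h2 : ∀ k sl, (∑ ω, if m ω = k then p ω else 0) * Q k sl =
      ∑ ω, if (x ω, l ω) = sl ∧ m ω = k then p ω else 0 := by
    intro k sl
    rw [hQ, condProb_eq]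
    by_cases h : (∑ ω, if m ω = k then p ω else 0) = 0
    · rw [h, zero_mul]
      symm
      have h' := (Finset.sum_eq_zero_iff_of_nonneg (fun ω _ => by
        split_ifs <;> simp [hp])).1 h
      apply Finset.sum_eq_zero
      intro ω hω
      have := h' ω hω
      by_cases hm : m ω = k <;> simp_all
    · exact mul_div_cancel₀ _ h
  simp_rw [h1]
  have h3 : ∀ G : M → ℝ, ∑ ω, p ω * G (m ω) = ∑ k, (∑ ω, if m ω = k then p ω else 0) * G k := by
    intro G
    simp_rw [Finset.sum_mul]
    rw [Finset.sum_comm]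
    apply Finset.sum_congr rfl
    intro ω _
    simp [ite_mul]
  rw [h3 (fun k => ∑ b, ∑ a, F a b k * Q k (a, b))]
  have h4 : ∀ k, (∑ ω, if m ω = k then p ω else 0) * (∑ b, ∑ a, F a b k * Q k (a, b)) =
      ∑ ω, if m ω = k then p ω * F (x ω) (l ω) k else 0 := by
    intro k
    rw [Finset.mul_sum]
    simp_rw [Finset.mul_sum, mul_left_comm _ (F _ _ _), h2, Finset.mul_sum]
    rw [Finset.sum_congr rfl (fun b _ => Finset.sum_comm), Finset.sum_comm]
    apply Finset.sum_congr rfl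
    intro ω _
    rw [Finset.sum_eq_single (l ω), Finset.sum_eq_single (x ω)]
    · by_cases hm : m ω = k <;> simp [hm, mul_comm]
    · intro a _ ha
      simp [Ne.symm ha]
    · simp
    · intro b _ hb
      apply Finset.sum_eq_zero
      intro a _
      simp [Ne.symm hb]
    · simp
  simp_rw [h4]
  rw [Finset.sum_comm]
  apply Finset.sum_congr rfl
  intro ω _
  simp

lemma e_aux {Ω A B M : Type} [Fintype Ω] [Fintype A]
    (p : Ω → ℝ) (hp : ∀ ω, 0 ≤ p ω) (x : Ω → A) (l : Ω → B) (m : Ω → M) (a : A) (b : B) (k : M) :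
    condProb p (fun ω' => x ω' = a) (fun ω' => (l ω', m ω') = (b, k)) =
      condProb p (fun ω' => (x ω', l ω') = (a, b)) (fun ω' => m ω' = k) /
        ∑ a', condProb p (fun ω' => (x ω', l ω') = (a', b)) (fun ω' => m ω' = k) := by
  simp only [condProb_eq]
  rw [← Finset.sum_div]
  have hs : ∑ a', ∑ ω, (if (x ω, l ω) = (a', b) ∧ m ω = k then p ω else 0) =
      ∑ ω, if (l ω, m ω) = (b, k) then p ω else 0 := by
    rw [Finset.sum_comm]
    apply Finset.sum_congr rfl
    intro ω _
    rw [Finset.sum_eq_single (x ω)]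
    · simp
    · intro a _ ha
      simp [Ne.symm ha]
    · simp
  have hn : ∑ ω, (if x ω = a ∧ (l ω, m ω) = (b, k) then p ω else 0) =
      ∑ ω, if (x ω, l ω) = (a, b) ∧ m ω = k then p ω else 0 := by
    apply Finset.sum_congr rfl
    intro ω _
    simp [and_assoc]
  rw [hs, hn]
  by_cases h : (∑ ω, if m ω = k then p ω else 0) = 0
  · have h' := (Finset.sum_eq_zero_iff_of_nonneg (fun ω _ => by
        split_ifs <;> simp [hp])).1 h
    have : (∑ ω, if (x ω, l ω) = (a, b) ∧ m ω = k then p ω else 0) = 0 := by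
      apply Finset.sum_eq_zero
      intro ω hω
      have := h' ω hω
      by_cases hm : m ω = k <;> simp_all
    rw [this]; simp
  · rw [div_div_div_cancel_right₀ h]

lemma mass_nn (P : PrimPMF X W V1 V2) (T : ℕ) (ω : ΩT X W V1 V2 T) : 0 ≤ mass P T ω := by
  unfold mass
  have h1 := P.pX0_nonneg ω.1
  have h2 := Finset.prod_nonneg (s := Finset.univ)
    (fun (t : Fin (T + 1)) _ => P.pW_nonneg t (ω.2.1 t))
  have h3 := Finset.prod_nonneg (s := Finset.univ)
    (fun (t : Fin (T + 1)) _ => P.pV1_nonneg t (ω.2.2.1 t))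
  have h4 := Finset.prod_nonneg (s := Finset.univ)
    (fun (t : Fin (T + 1)) _ => P.pV2_nonneg t (ω.2.2.2 t))
  positivity

/-- Lemma 11 of the paper. With the time-`T` value functions
`J¹_T(π¹, u²) := min_{u¹} Σ_x c_T(x,u¹,u²)·π¹(x)` and
`J²_T(π²) := min_{u²} E[J¹_T(Π¹_T, u²) | Π²_T = π², U²_T = u²]`
(by Lemma 4 the inner conditional expectation equals
`Σ_l (Σ_x π²(x,l)) · J¹_T(e_T(π², l), u²)`):
(1) for every admissible team strategy of the structural form the expected
terminal cost satisfies `𝒥_T(g) ≥ E[J²_T(Π²_T)]`; and (2) the argmin laws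
`g1star`, `g2star` achieve equality. -/
theorem terminal_DP_agent2
    [∀ t, Fintype (X t)] [∀ t, Fintype (U1 t)] [∀ t, Fintype (U2 t)]
    [∀ t, Fintype (Y1 t)] [∀ t, Fintype (Y2 t)]
    [∀ t, Nonempty (U1 t)] [∀ t, Nonempty (U2 t)]
    (T : ℕ) (S : Sys X U1 U2 W V1 V2 Y1 Y2) (P : PrimPMF X W V1 V2)
    (J1T : (X T → ℝ) → U2 T → ℝ)
    (hJ1T : ∀ (π : X T → ℝ) (u2 : U2 T),
      J1T π u2 = Finset.univ.inf' Finset.univ_nonempty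
        (fun u1 : U1 T => ∑ x, S.c T x u1 u2 * π x))
    (J2T : (X T × Lp Y1 U1 T → ℝ) → ℝ)
    (hJ2T : ∀ π2 : X T × Lp Y1 U1 T → ℝ,
      J2T π2 = Finset.univ.inf' Finset.univ_nonempty
        (fun u2 : U2 T => ∑ l : Lp Y1 U1 T, (∑ x, π2 (x, l)) * J1T (eMap T π2 l) u2)) :
    ∀ (g : Strat U1 U2 Y1 Y2)
      (φ1 : ∀ t, (X t → ℝ) → (X t × Lp Y1 U1 t → ℝ) → U1 t)
      (φ1T : (X T → ℝ) → (X T × Lp Y1 U1 T → ℝ) → U2 T → U1 T)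
      (φ2 : ∀ t, (X t × Lp Y1 U1 t → ℝ) → U2 t),
      (∀ t, t < T → ∀ ω : ΩT X W V1 V2 T, 0 < mass P T ω →
        u1Traj S g (toPrim T ω) t =
          φ1 t (infoState1 S g P T ω t) (infoState2 S g P T ω t)) →
      (∀ ω : ΩT X W V1 V2 T, 0 < mass P T ω →
        u1Traj S g (toPrim T ω) T =
          φ1T (infoState1 S g P T ω T) (infoState2 S g P T ω T)
            (u2Traj S g (toPrim T ω) T)) →
      (∀ t, t ≤ T → ∀ ω : ΩT X W V1 V2 T, 0 < mass P T ω →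
        u2Traj S g (toPrim T ω) t = φ2 t (infoState2 S g P T ω t)) →
      -- (1) lower bound on the expected terminal-stage cost
      ((∑ ω : ΩT X W V1 V2 T, mass P T ω * stageCost S g (toPrim T ω) T) ≥
        ∑ ω : ΩT X W V1 V2 T, mass P T ω * J2T (infoState2 S g P T ω T)) ∧
      -- (2) equality for the argmin laws of both agents at time T
      (∃ (g1star : (X T → ℝ) → U2 T → U1 T)
         (g2star : (X T × Lp Y1 U1 T → ℝ) → U2 T),
        (∀ (π : X T → ℝ) (u2 : U2 T),
          (∑ x, S.c T x (g1star π u2) u2 * π x) = J1T π u2) ∧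
        (∀ π2 : X T × Lp Y1 U1 T → ℝ,
          (∑ l : Lp Y1 U1 T, (∑ x, π2 (x, l)) * J1T (eMap T π2 l) (g2star π2)) =
            J2T π2) ∧
        (∑ ω : ΩT X W V1 V2 T, mass P T ω *
            S.c T (xTraj S g (toPrim T ω) T)
              (g1star (infoState1 S g P T ω T) (g2star (infoState2 S g P T ω T)))
              (g2star (infoState2 S g P T ω T))) =
          ∑ ω : ΩT X W V1 V2 T, mass P T ω * J2T (infoState2 S g P T ω T)) := by
  intro g φ1 φ1T φ2 _ _ _
  have hp := mass_nn (V1 := V1) (V2 := V2) P T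
  let Q : M2 Y2 U2 T → X T × Lp Y1 U1 T → ℝ := fun k sl => condProb (mass P T)
    (fun ω' => (xTraj S g (toPrim T ω') T, lpTraj S g (toPrim T ω') T) = sl)
    (fun ω' => m2Traj S g (toPrim T ω') T = k)
  have hQ2 : ∀ ω, infoState2 S g P T ω T = Q (m2Traj S g (toPrim T ω) T) := fun ω => rfl
  have hQ1 : ∀ ω, infoState1 S g P T ω T =
      eMap T (Q (m2Traj S g (toPrim T ω) T)) (lpTraj S g (toPrim T ω) T) := by
    intro ω
    funext a
    exact e_aux (mass P T) hp (fun ω => xTraj S g (toPrim T ω) T)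
      (fun ω => lpTraj S g (toPrim T ω) T) (fun ω => m2Traj S g (toPrim T ω) T) a _ _
  have hQ0 : ∀ k sl, 0 ≤ Q k sl := by
    intro k sl
    simp only [Q, condProb]
    apply div_nonneg <;> apply Finset.sum_nonneg <;> intro i _ <;> split_ifs <;> simp [hp]
  have key := key_aux (mass P T) hp (fun ω => xTraj S g (toPrim T ω) T)
      (fun ω => lpTraj S g (toPrim T ω) T) (fun ω => m2Traj S g (toPrim T ω) T) Q
      (fun _ _ => rfl)
  constructor
  · have := key (fun a b k => S.c T a (g.g1 T (b, k)) (g.g2 T k))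
    have h0 : (∑ ω : ΩT X W V1 V2 T, mass P T ω * stageCost S g (toPrim T ω) T) = _ := this
    rw [h0, ge_iff_le]
    apply Finset.sum_le_sum
    intro ω _
    apply mul_le_mul_of_nonneg_left _ (hp ω)
    rw [hQ2, hJ2T]
    refine (Finset.inf'_le _ (Finset.mem_univ (g.g2 T (m2Traj S g (toPrim T ω) T)))).trans ?_
    apply Finset.sum_le_sum
    intro b _
    apply mul_le_mul_of_nonneg_left _ (Finset.sum_nonneg fun a _ => hQ0 _ _)
    rw [hJ1T]
    exact Finset.inf'_le _ (Finset.mem_univ (g.g1 T (b, m2Traj S g (toPrim T ω) T)))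
  · have e1 : ∀ (π : X T → ℝ) (u2 : U2 T), ∃ u1 : U1 T,
        (∑ x, S.c T x u1 u2 * π x) = J1T π u2 := by
      intro π u2
      obtain ⟨u, _, hu⟩ := Finset.exists_mem_eq_inf' (Finset.univ_nonempty (α := U1 T))
        (fun u1 : U1 T => ∑ x, S.c T x u1 u2 * π x)
      exact ⟨u, by rw [hJ1T, hu]⟩
    have e2 : ∀ π2 : X T × Lp Y1 U1 T → ℝ, ∃ u2 : U2 T,
        (∑ l : Lp Y1 U1 T, (∑ x, π2 (x, l)) * J1T (eMap T π2 l) u2) = J2T π2 := by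
      intro π2
      obtain ⟨u, _, hu⟩ := Finset.exists_mem_eq_inf' (Finset.univ_nonempty (α := U2 T))
        (fun u2 : U2 T => ∑ l : Lp Y1 U1 T, (∑ x, π2 (x, l)) * J1T (eMap T π2 l) u2)
      exact ⟨u, by rw [hJ2T, hu]⟩
    choose g1s hg1 using e1
    choose g2s hg2 using e2
    refine ⟨g1s, g2s, hg1, hg2, ?_⟩
    simp only [hQ1, hQ2]
    have := key (fun a b k => S.c T a (g1s (eMap T (Q k) b) (g2s (Q k))) (g2s (Q k)))
    refine this.trans ?_
    apply Finset.sum_congr rfl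
    intro ω _
    congr 1
    rw [← hg2]
    apply Finset.sum_congr rfl
    intro b _
    rw [← hg1]
    rfl

end

end NestedTeam
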